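/- Soundness and completeness of tableaux for the basic justification logic J: for any constant specification CS for J, a J-formula A has a J^e_CS-tableau proof if and only if A is J_CS-valid. -/

import Mathlib

namespace JLTab

/-- Justification terms: variables, constants, application, sum,
verifier `!`, negative verifier `?`, weak negative verifier `?̄`. -/
inductive Term : Type
  | var : ℕ → Term
  | const : ℕ → Term
  | app : Term → Term → Term
  | sum : Term → Term → Term
  | bang : Term → Term
  | quest : Term → Term
  | qbar : Term → Term
  deriving DecidableEq

/-- JL-formulas: `A ::= p | ⊥ | ¬A | A → A | t:A`. -/
inductive Fml : Type
  | prop : ℕ → Fml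
  | bot : Fml
  | neg : Fml → Fml
  | imp : Fml → Fml → Fml
  | box : Term → Fml → Fml
  deriving DecidableEq

/-- A justification logic JL is J extended by any combination of jT, jD, j4, jB, j5. -/
structure Logic where
  hasT : Bool
  hasD : Bool
  has4 : Bool
  hasB : Bool
  has5 : Bool

/-- The basic justification logic J. -/
def Logic.J : Logic := ⟨false, false, false, false, false⟩

/-- The logic of proofs LP = JT4. -/
def Logic.LP : Logic := ⟨true, false, true, false, false⟩

/-- The logic JT45. -/
def Logic.JT45 : Logic := ⟨true, false, true, false, true⟩

/-- Propositional evaluation of a formula, treating propositional variables and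
formulas `t:A` as atoms. -/
def evalProp (v : Fml → Bool) : Fml → Bool
  | .prop n => v (.prop n)
  | .bot => false
  | .neg A => !(evalProp v A)
  | .imp A B => !(evalProp v A) || evalProp v B
  | .box t A => v (.box t A)

/-- A propositional tautology. -/
def IsTaut (A : Fml) : Prop := ∀ v : Fml → Bool, evalProp v A = true

/-- Axiom instances of the justification logic `L`. -/
inductive Axm (L : Logic) : Fml → Prop
  | taut {A} : IsTaut A → Axm L A
  | sumL {s t A} : Axm L (.imp (.box s A) (.box (.sum s t) A))
  | sumR {s t A} : Axm L (.imp (.box s A) (.box (.sum t s) A))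
  | jK {s t A B} :
      Axm L (.imp (.box s (.imp A B)) (.imp (.box t A) (.box (.app s t) B)))
  | jT {t A} : L.hasT = true → Axm L (.imp (.box t A) A)
  | jD {t} : L.hasD = true → Axm L (.imp (.box t .bot) .bot)
  | j4 {t A} : L.has4 = true → Axm L (.imp (.box t A) (.box (.bang t) (.box t A)))
  | jB {t A} : L.hasB = true →
      Axm L (.imp (.neg A) (.box (.qbar t) (.neg (.box t A))))
  | j5 {t A} : L.has5 = true →
      Axm L (.imp (.neg (.box t A)) (.box (.quest t) (.neg (.box t A))))

/-- Formulas of the form `c_{i_n} : ⋯ : c_{i_1} : A` (n ≥ 1) with `A` an axiom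
instance of `L`; exactly the formulas produced by Iterated Axiom Necessitation. -/
inductive IsIAN (L : Logic) : Fml → Prop
  | base {c A} : Axm L A → IsIAN L (.box (.const c) A)
  | step {c F} : IsIAN L F → IsIAN L (.box (.const c) F)

/-- A constant specification for `L`: a downward closed set of formulas of the
form `c_{i_n} : ⋯ : c_{i_1} : A` with `A` an axiom instance of `L`. -/
structure ConstSpec (L : Logic) where
  set : Set Fml
  mem_ian : ∀ F ∈ set, IsIAN L F
  downward : ∀ c F, Fml.box (Term.const c) F ∈ set → IsIAN L F → F ∈ set

/-- The Hilbert system JL_CS: axioms of `L`, Modus Ponens, and Iterated Axiom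
Necessitation restricted to the constant specification `cs`. -/
inductive Deriv (L : Logic) (cs : ConstSpec L) : Fml → Prop
  | axm {A} : Axm L A → Deriv L cs A
  | mp {A B} : Deriv L cs (.imp A B) → Deriv L cs A → Deriv L cs B
  | ian {F} : F ∈ cs.set → Deriv L cs F

/-- An M-model (Mkrtychev model): an admissible evidence function together with
a valuation of propositional variables. -/
structure MModel where
  ev : Term → Set Fml
  val : ℕ → Prop

/-- Truth in an M-model; `t:A` is true iff `A ∈ E(t)`. -/
def MModel.sat (M : MModel) : Fml → Prop
  | .prop n => M.val n
  | .bot => False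
  | .neg A => ¬ M.sat A
  | .imp A B => M.sat A → M.sat B
  | .box t A => A ∈ M.ev t

/-- `M` is an M-model for JL_CS: conditions E1–E3 always, and E4–E8 according to
the extra axioms of the logic `L`. -/
structure IsModel (L : Logic) (cs : ConstSpec L) (M : MModel) : Prop where
  e1 : ∀ s t A B, Fml.imp A B ∈ M.ev s → A ∈ M.ev t → B ∈ M.ev (.app s t)
  e2l : ∀ s t, M.ev s ⊆ M.ev (.sum s t)
  e2r : ∀ s t, M.ev t ⊆ M.ev (.sum s t)
  e3 : ∀ c F, Fml.box (.const c) F ∈ cs.set → F ∈ M.ev (.const c)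
  e4 : L.hasT = true → ∀ t A, A ∈ M.ev t → M.sat A
  e5 : L.hasD = true → ∀ t, Fml.bot ∉ M.ev t
  e6 : L.has4 = true → ∀ t A, A ∈ M.ev t → Fml.box t A ∈ M.ev (.bang t)
  e7 : L.hasB = true → ∀ t A, ¬ M.sat A → Fml.neg (.box t A) ∈ M.ev (.qbar t)
  e8 : L.has5 = true → ∀ t A, A ∉ M.ev t → Fml.neg (.box t A) ∈ M.ev (.quest t)

/-- `A` is JL_CS-valid: true in every M-model of JL_CS. -/
def Valid (L : Logic) (cs : ConstSpec L) (A : Fml) : Prop :=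
  ∀ M : MModel, IsModel L cs M → M.sat A

/-- `Subf A B`: `A` is a subformula of `B`. -/
inductive Subf : Fml → Fml → Prop
  | refl (A) : Subf A A
  | neg {A B} : Subf A B → Subf A (.neg B)
  | impL {A B C} : Subf A B → Subf A (.imp B C)
  | impR {A C B} : Subf A C → Subf A (.imp B C)
  | box {A B t} : Subf A B → Subf A (.box t B)

/-- `A` is a CS-subformula of the root set `R`: a subformula of a formula in
`R ∪ CS`. -/
def CSSub {L : Logic} (cs : ConstSpec L) (R : Set Fml) (A : Fml) : Prop :=
  (∃ B ∈ R, Subf A B) ∨ (∃ F ∈ cs.set, Subf A F)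

/-- `A` is a weak CS-subformula of the root set `R`: a subformula, or the
negation of a subformula, of a formula in `R ∪ CS`. -/
def WeakCSSub {L : Logic} (cs : ConstSpec L) (R : Set Fml) (A : Fml) : Prop :=
  CSSub cs R A ∨ ∃ C, A = Fml.neg C ∧ CSSub cs R C

/-- `SubTm u t`: `u` is a subterm of `t`. -/
inductive SubTm : Term → Term → Prop
  | refl (t) : SubTm t t
  | appL {u s t} : SubTm u s → SubTm u (.app s t)
  | appR {u s t} : SubTm u t → SubTm u (.app s t)
  | sumL {u s t} : SubTm u s → SubTm u (.sum s t)
  | sumR {u s t} : SubTm u t → SubTm u (.sum s t)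
  | bang {u t} : SubTm u t → SubTm u (.bang t)
  | quest {u t} : SubTm u t → SubTm u (.quest t)
  | qbar {u t} : SubTm u t → SubTm u (.qbar t)

/-- `OccT u A`: the term `u` occurs in the formula `A`. -/
inductive OccT (u : Term) : Fml → Prop
  | neg {A} : OccT u A → OccT u (.neg A)
  | impL {A B} : OccT u A → OccT u (.imp A B)
  | impR {A B} : OccT u B → OccT u (.imp A B)
  | boxT {t A} : SubTm u t → OccT u (.box t A)
  | boxF {t A} : OccT u A → OccT u (.box t A)

/-- The term `u` occurs in (some formula of) the root set `R`. -/
def OccRoot (R : Set Fml) (u : Term) : Prop := ∃ B ∈ R, OccT u B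

/-- Nodes of a tableau: JL-formulas `A`, and evidential formulas
`[t,A]` (`pos`) and `∼[t,A]` (`neg`). -/
inductive Node : Type
  | fml : Fml → Node
  | pos : Term → Fml → Node
  | neg : Term → Fml → Node
  deriving DecidableEq

/-- `TabN L cs pb cut R Γ n`: the branch `Γ` of a tableau with root set `R` has
a closed tableau continuation using `n` rule applications.  The flag `pb`
enables the analytic rules (PB), (PB_e); the flag `cut` enables the
unrestricted cut rules (cut_f), (cut_e).  The rules (e), (e_⊥), (!), (?̄), (?)
are enabled according to the extra axioms of the logic `L`.  Base cases are the
four branch-closure conditions. -/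
inductive TabN (L : Logic) (cs : ConstSpec L) (pb cut : Bool) (R : Set Fml) :
    Set Node → ℕ → Prop
  | closeF {Γ A} : Node.fml A ∈ Γ → Node.fml (.neg A) ∈ Γ → TabN L cs pb cut R Γ 0
  | closeE {Γ t A} : Node.pos t A ∈ Γ → Node.neg t A ∈ Γ → TabN L cs pb cut R Γ 0
  | closeBot {Γ} : Node.fml .bot ∈ Γ → TabN L cs pb cut R Γ 0
  | closeCS {Γ c F} : Fml.box (.const c) F ∈ cs.set →
      Node.fml (.neg (.box (.const c) F)) ∈ Γ → TabN L cs pb cut R Γ 0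
  | fNeg {Γ A n} : Node.fml (.neg (.neg A)) ∈ Γ →
      TabN L cs pb cut R (insert (Node.fml A) Γ) n → TabN L cs pb cut R Γ (n + 1)
  | fImp {Γ A B n} : Node.fml (.neg (.imp A B)) ∈ Γ →
      TabN L cs pb cut R (insert (Node.fml A) (insert (Node.fml (.neg B)) Γ)) n →
      TabN L cs pb cut R Γ (n + 1)
  | tImp {Γ A B m n} : Node.fml (.imp A B) ∈ Γ →
      TabN L cs pb cut R (insert (Node.fml (.neg A)) Γ) m →
      TabN L cs pb cut R (insert (Node.fml B) Γ) n →
      TabN L cs pb cut R Γ (m + n + 1)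
  | te {Γ t A n} : Node.fml (.box t A) ∈ Γ →
      TabN L cs pb cut R (insert (Node.pos t A) Γ) n → TabN L cs pb cut R Γ (n + 1)
  | fe {Γ t A n} : Node.fml (.neg (.box t A)) ∈ Γ →
      TabN L cs pb cut R (insert (Node.neg t A) Γ) n → TabN L cs pb cut R Γ (n + 1)
  | plusL {Γ t s A n} : Node.neg (.sum t s) A ∈ Γ →
      TabN L cs pb cut R (insert (Node.neg t A) Γ) n → TabN L cs pb cut R Γ (n + 1)
  | plusR {Γ t s A n} : Node.neg (.sum t s) A ∈ Γ →
      TabN L cs pb cut R (insert (Node.neg s A) Γ) n → TabN L cs pb cut R Γ (n + 1)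
  | appR {Γ s t A B n} : Node.pos s (.imp A B) ∈ Γ → Node.pos t A ∈ Γ →
      CSSub cs R (.imp A B) → OccRoot R (.app s t) →
      TabN L cs pb cut R (insert (Node.pos (.app s t) B) Γ) n →
      TabN L cs pb cut R Γ (n + 1)
  | rulePB {Γ A m n} : pb = true → CSSub cs R A →
      TabN L cs pb cut R (insert (Node.fml A) Γ) m →
      TabN L cs pb cut R (insert (Node.fml (.neg A)) Γ) n →
      TabN L cs pb cut R Γ (m + n + 1)
  | rulePBe {Γ t A m n} : pb = true → CSSub cs R A → OccRoot R t →
      TabN L cs pb cut R (insert (Node.pos t A) Γ) m →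
      TabN L cs pb cut R (insert (Node.neg t A) Γ) n →
      TabN L cs pb cut R Γ (m + n + 1)
  | cutF {Γ A m n} : cut = true →
      TabN L cs pb cut R (insert (Node.fml A) Γ) m →
      TabN L cs pb cut R (insert (Node.fml (.neg A)) Γ) n →
      TabN L cs pb cut R Γ (m + n + 1)
  | cutE {Γ t A m n} : cut = true →
      TabN L cs pb cut R (insert (Node.pos t A) Γ) m →
      TabN L cs pb cut R (insert (Node.neg t A) Γ) n →
      TabN L cs pb cut R Γ (m + n + 1)
  | ruleT {Γ t A n} : L.hasT = true → Node.pos t A ∈ Γ →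
      TabN L cs pb cut R (insert (Node.fml A) Γ) n → TabN L cs pb cut R Γ (n + 1)
  | ruleD {Γ t n} : L.hasD = true → Node.pos t .bot ∈ Γ →
      TabN L cs pb cut R (insert (Node.fml .bot) Γ) n → TabN L cs pb cut R Γ (n + 1)
  | rule4 {Γ t A n} : L.has4 = true → Node.neg (.bang t) (.box t A) ∈ Γ →
      TabN L cs pb cut R (insert (Node.neg t A) Γ) n → TabN L cs pb cut R Γ (n + 1)
  | ruleB {Γ t A n} : L.hasB = true → Node.neg (.qbar t) (.neg (.box t A)) ∈ Γ →
      TabN L cs pb cut R (insert (Node.fml A) Γ) n → TabN L cs pb cut R Γ (n + 1)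
  | rule5 {Γ t A n} : L.has5 = true → Node.neg (.quest t) (.neg (.box t A)) ∈ Γ →
      TabN L cs pb cut R (insert (Node.pos t A) Γ) n → TabN L cs pb cut R Γ (n + 1)

/-- There is a closed tableau below the branch `Γ` (root set `R`). -/
def Tab (L : Logic) (cs : ConstSpec L) (pb cut : Bool) (R : Set Fml)
    (Γ : Set Node) : Prop :=
  ∃ n, TabN L cs pb cut R Γ n

/-- A tableau proof of `A`: a closed tableau whose root is `¬A`. -/
def TabProof (L : Logic) (cs : ConstSpec L) (pb cut : Bool) (A : Fml) : Prop :=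
  Tab L cs pb cut {Fml.neg A} {Node.fml (Fml.neg A)}

/-- A single application of a JL^e_CS-tableau rule to the branch `Γ` (root set
`R`), producing the list of extended branches (one for a non-branching rule,
two for a branching rule). -/
inductive RuleApp (L : Logic) (cs : ConstSpec L) (R : Set Fml) (Γ : Set Node) :
    List (Set Node) → Prop
  | fNeg {A} : Node.fml (.neg (.neg A)) ∈ Γ →
      RuleApp L cs R Γ [insert (Node.fml A) Γ]
  | fImp {A B} : Node.fml (.neg (.imp A B)) ∈ Γ →
      RuleApp L cs R Γ [insert (Node.fml A) (insert (Node.fml (.neg B)) Γ)]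
  | tImp {A B} : Node.fml (.imp A B) ∈ Γ →
      RuleApp L cs R Γ [insert (Node.fml (.neg A)) Γ, insert (Node.fml B) Γ]
  | te {t A} : Node.fml (.box t A) ∈ Γ → RuleApp L cs R Γ [insert (Node.pos t A) Γ]
  | fe {t A} : Node.fml (.neg (.box t A)) ∈ Γ →
      RuleApp L cs R Γ [insert (Node.neg t A) Γ]
  | plusL {t s A} : Node.neg (.sum t s) A ∈ Γ →
      RuleApp L cs R Γ [insert (Node.neg t A) Γ]
  | plusR {t s A} : Node.neg (.sum t s) A ∈ Γ →
      RuleApp L cs R Γ [insert (Node.neg s A) Γ]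
  | appR {s t A B} : Node.pos s (.imp A B) ∈ Γ → Node.pos t A ∈ Γ →
      CSSub cs R (.imp A B) → OccRoot R (.app s t) →
      RuleApp L cs R Γ [insert (Node.pos (.app s t) B) Γ]
  | rulePB {A} : CSSub cs R A →
      RuleApp L cs R Γ [insert (Node.fml A) Γ, insert (Node.fml (.neg A)) Γ]
  | rulePBe {t A} : CSSub cs R A → OccRoot R t →
      RuleApp L cs R Γ [insert (Node.pos t A) Γ, insert (Node.neg t A) Γ]
  | ruleT {t A} : L.hasT = true → Node.pos t A ∈ Γ →
      RuleApp L cs R Γ [insert (Node.fml A) Γ]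
  | ruleD {t} : L.hasD = true → Node.pos t .bot ∈ Γ →
      RuleApp L cs R Γ [insert (Node.fml .bot) Γ]
  | rule4 {t A} : L.has4 = true → Node.neg (.bang t) (.box t A) ∈ Γ →
      RuleApp L cs R Γ [insert (Node.neg t A) Γ]
  | ruleB {t A} : L.hasB = true → Node.neg (.qbar t) (.neg (.box t A)) ∈ Γ →
      RuleApp L cs R Γ [insert (Node.fml A) Γ]
  | rule5 {t A} : L.has5 = true → Node.neg (.quest t) (.neg (.box t A)) ∈ Γ →
      RuleApp L cs R Γ [insert (Node.pos t A) Γ]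

/-- Satisfaction of tableau nodes in an M-model: `M` satisfies `[t,A]` iff
`A ∈ E(t)`, and satisfies `∼[t,A]` iff `A ∉ E(t)`. -/
def NodeSat (M : MModel) : Node → Prop
  | .fml A => M.sat A
  | .pos t A => A ∈ M.ev t
  | .neg t A => A ∉ M.ev t

/-- Branches reachable from the initial branch by tableau rule applications. -/
inductive Reach (L : Logic) (cs : ConstSpec L) (R : Set Fml) :
    Set Node → Set Node → Prop
  | refl (Γ) : Reach L cs R Γ Γ
  | step {Γ Γ' Γ'' exts} : Reach L cs R Γ Γ' → RuleApp L cs R Γ' exts →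
      Γ'' ∈ exts → Reach L cs R Γ Γ''

/-- One non-redundant tableau construction step: a rule application properly
extending the branch. -/
def Step (L : Logic) (cs : ConstSpec L) (R : Set Fml) (Γ Γ' : Set Node) : Prop :=
  ∃ exts, RuleApp L cs R Γ exts ∧ Γ' ∈ exts ∧ Γ ⊂ Γ'

/-- The term is in the language of the logic `L` (which contains those
operations occurring in the axioms of `L`). -/
def TermInLang (L : Logic) : Term → Prop
  | .var _ => True
  | .const _ => True
  | .app s t => TermInLang L s ∧ TermInLang L t
  | .sum s t => TermInLang L s ∧ TermInLang L t
  | .bang t => L.has4 = true ∧ TermInLang L t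
  | .quest t => L.has5 = true ∧ TermInLang L t
  | .qbar t => L.hasB = true ∧ TermInLang L t

/-- The formula is in the language of the logic `L`. -/
def FmlInLang (L : Logic) : Fml → Prop
  | .prop _ => True
  | .bot => True
  | .neg A => FmlInLang L A
  | .imp A B => FmlInLang L A ∧ FmlInLang L B
  | .box t A => TermInLang L t ∧ FmlInLang L A

/-- The initial branch of a tableau for a finite set `S` of formulas. -/
def branchOf (S : Finset Fml) : Set Node := Node.fml '' (↑S : Set Fml)

end JLTab


namespace JLTab

theorem tabN_mono {L : Logic} {cs : ConstSpec L} {pb cut : Bool} {R : Set Fml}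
    {Γ : Set Node} {n : ℕ} (h : TabN L cs pb cut R Γ n) :
    ∀ {Δ : Set Node}, Γ ⊆ Δ → TabN L cs pb cut R Δ n := by
  induction h with
  | closeF h1 h2 => exact fun hs => .closeF (hs h1) (hs h2)
  | closeE h1 h2 => exact fun hs => .closeE (hs h1) (hs h2)
  | closeBot h1 => exact fun hs => .closeBot (hs h1)
  | closeCS h1 h2 => exact fun hs => .closeCS h1 (hs h2)
  | fNeg h1 _ ih => exact fun hs => .fNeg (hs h1) (ih (Set.insert_subset_insert hs))
  | fImp h1 _ ih =>
    exact fun hs => .fImp (hs h1)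
      (ih (Set.insert_subset_insert (Set.insert_subset_insert hs)))
  | tImp h1 _ _ ih1 ih2 =>
    exact fun hs => .tImp (hs h1) (ih1 (Set.insert_subset_insert hs))
      (ih2 (Set.insert_subset_insert hs))
  | te h1 _ ih => exact fun hs => .te (hs h1) (ih (Set.insert_subset_insert hs))
  | fe h1 _ ih => exact fun hs => .fe (hs h1) (ih (Set.insert_subset_insert hs))
  | plusL h1 _ ih => exact fun hs => .plusL (hs h1) (ih (Set.insert_subset_insert hs))
  | plusR h1 _ ih => exact fun hs => .plusR (hs h1) (ih (Set.insert_subset_insert hs))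
  | appR h1 h2 h3 h4 _ ih =>
    exact fun hs => .appR (hs h1) (hs h2) h3 h4 (ih (Set.insert_subset_insert hs))
  | rulePB h1 h2 _ _ ih1 ih2 =>
    exact fun hs => .rulePB h1 h2 (ih1 (Set.insert_subset_insert hs))
      (ih2 (Set.insert_subset_insert hs))
  | rulePBe h1 h2 h3 _ _ ih1 ih2 =>
    exact fun hs => .rulePBe h1 h2 h3 (ih1 (Set.insert_subset_insert hs))
      (ih2 (Set.insert_subset_insert hs))
  | cutF h1 _ _ ih1 ih2 =>
    exact fun hs => .cutF h1 (ih1 (Set.insert_subset_insert hs))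
      (ih2 (Set.insert_subset_insert hs))
  | cutE h1 _ _ ih1 ih2 =>
    exact fun hs => .cutE h1 (ih1 (Set.insert_subset_insert hs))
      (ih2 (Set.insert_subset_insert hs))
  | ruleT h1 h2 _ ih => exact fun hs => .ruleT h1 (hs h2) (ih (Set.insert_subset_insert hs))
  | ruleD h1 h2 _ ih => exact fun hs => .ruleD h1 (hs h2) (ih (Set.insert_subset_insert hs))
  | rule4 h1 h2 _ ih => exact fun hs => .rule4 h1 (hs h2) (ih (Set.insert_subset_insert hs))
  | ruleB h1 h2 _ ih => exact fun hs => .ruleB h1 (hs h2) (ih (Set.insert_subset_insert hs))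
  | rule5 h1 h2 _ ih => exact fun hs => .rule5 h1 (hs h2) (ih (Set.insert_subset_insert hs))

/-- Finite support inside a branch. -/
def FinSupp (L : Logic) (cs : ConstSpec L) (pb cut : Bool) (R : Set Fml)
    (Γ : Set Node) (n : ℕ) : Prop :=
  ∃ Δ : Set Node, Δ.Finite ∧ Δ ⊆ Γ ∧ TabN L cs pb cut R Δ n

/-- Pull a finite support back along an insertion. -/
theorem FinSupp.pull {L : Logic} {cs : ConstSpec L} {pb cut : Bool} {R : Set Fml}
    {Γ : Set Node} {x : Node} {n : ℕ} (h : FinSupp L cs pb cut R (insert x Γ) n) :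
    ∃ Δ : Set Node, Δ.Finite ∧ Δ ⊆ Γ ∧ TabN L cs pb cut R (insert x Δ) n := by
  obtain ⟨Δ, hf, hs, ht⟩ := h
  refine ⟨Δ \ {x}, hf.subset Set.sdiff_subset, ?_, tabN_mono ht ?_⟩
  · rintro y ⟨hy, hyx⟩
    exact (hs hy).resolve_left hyx
  · intro y hy
    by_cases hyx : y = x
    · exact Or.inl hyx
    · exact Or.inr ⟨hy, hyx⟩

theorem FinSupp.one {L : Logic} {cs : ConstSpec L} {pb cut : Bool} {R : Set Fml}
    {Γ : Set Node} {x : Node} {m n : ℕ} (P : Set Node) (hP : P.Finite) (hPΓ : P ⊆ Γ)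
    (h : FinSupp L cs pb cut R (insert x Γ) m)
    (k : ∀ Δ : Set Node, P ⊆ Δ → TabN L cs pb cut R (insert x Δ) m →
      TabN L cs pb cut R Δ n) : FinSupp L cs pb cut R Γ n := by
  obtain ⟨Δ, hf, hs, ht⟩ := h.pull
  exact ⟨P ∪ Δ, hP.union hf, Set.union_subset hPΓ hs, k _ Set.subset_union_left
    (tabN_mono ht (Set.insert_subset_insert Set.subset_union_right))⟩

theorem FinSupp.two {L : Logic} {cs : ConstSpec L} {pb cut : Bool} {R : Set Fml}
    {Γ : Set Node} {x y : Node} {m m' n : ℕ} (P : Set Node) (hP : P.Finite) (hPΓ : P ⊆ Γ)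
    (h : FinSupp L cs pb cut R (insert x Γ) m)
    (h' : FinSupp L cs pb cut R (insert y Γ) m')
    (k : ∀ Δ : Set Node, P ⊆ Δ → TabN L cs pb cut R (insert x Δ) m →
      TabN L cs pb cut R (insert y Δ) m' →
      TabN L cs pb cut R Δ n) : FinSupp L cs pb cut R Γ n := by
  obtain ⟨Δ, hf, hs, ht⟩ := h.pull
  obtain ⟨Δ', hf', hs', ht'⟩ := h'.pull
  refine ⟨P ∪ (Δ ∪ Δ'), hP.union (hf.union hf'),
    Set.union_subset hPΓ (Set.union_subset hs hs'), k _ Set.subset_union_left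
    (tabN_mono ht (Set.insert_subset_insert ?_))
    (tabN_mono ht' (Set.insert_subset_insert ?_))⟩
  · exact fun z hz => Or.inr (Or.inl hz)
  · exact fun z hz => Or.inr (Or.inr hz)

theorem tabN_finSupp {cs : ConstSpec Logic.J} {R : Set Fml}
    {Γ : Set Node} {n : ℕ} (h : TabN Logic.J cs true false R Γ n) :
    FinSupp Logic.J cs true false R Γ n := by
  induction h with
  | closeF h1 h2 =>
    exact ⟨{_, _}, Set.toFinite _, Set.insert_subset h1 (Set.singleton_subset_iff.2 h2),
      .closeF (Or.inl rfl) (Or.inr rfl)⟩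
  | closeE h1 h2 =>
    exact ⟨{_, _}, Set.toFinite _, Set.insert_subset h1 (Set.singleton_subset_iff.2 h2),
      .closeE (Or.inl rfl) (Or.inr rfl)⟩
  | closeBot h1 =>
    exact ⟨{_}, Set.toFinite _, Set.singleton_subset_iff.2 h1, .closeBot rfl⟩
  | closeCS h1 h2 =>
    exact ⟨{_}, Set.toFinite _, Set.singleton_subset_iff.2 h2, .closeCS h1 rfl⟩
  | fNeg h1 _ ih =>
    exact ih.one {_} (Set.toFinite _) (Set.singleton_subset_iff.2 h1)
      fun Δ hΔ ht => .fNeg (hΔ rfl) ht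
  | @fImp Γ A B n h1 _ ih =>
    obtain ⟨Δ, hf, hs, ht⟩ := ih.pull
    obtain ⟨Δ', hf', hs', ht'⟩ : ∃ Δ' : Set Node, Δ'.Finite ∧ Δ' ⊆ Γ ∧
        Δ ⊆ insert (Node.fml (.neg B)) Δ' := by
      refine ⟨Δ \ {Node.fml (.neg B)}, hf.subset Set.sdiff_subset, ?_, ?_⟩
      · rintro y ⟨hy, hyx⟩
        exact (hs hy).resolve_left hyx
      · intro y hy
        by_cases hyx : y = Node.fml (.neg B)
        · exact Or.inl hyx
        · exact Or.inr ⟨hy, hyx⟩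
    exact ⟨insert (Node.fml (.neg (.imp A B))) Δ', hf'.insert _, Set.insert_subset h1 hs',
      .fImp (Or.inl rfl) (tabN_mono ht (Set.insert_subset_insert
        (ht'.trans (Set.insert_subset_insert (Set.subset_insert _ _)))))⟩
  | tImp h1 _ _ ih1 ih2 =>
    exact ih1.two {_} (Set.toFinite _) (Set.singleton_subset_iff.2 h1) ih2
      fun Δ hΔ ht ht' => .tImp (hΔ rfl) ht ht'
  | te h1 _ ih =>
    exact ih.one {_} (Set.toFinite _) (Set.singleton_subset_iff.2 h1)
      fun Δ hΔ ht => .te (hΔ rfl) ht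
  | fe h1 _ ih =>
    exact ih.one {_} (Set.toFinite _) (Set.singleton_subset_iff.2 h1)
      fun Δ hΔ ht => .fe (hΔ rfl) ht
  | plusL h1 _ ih =>
    exact ih.one {_} (Set.toFinite _) (Set.singleton_subset_iff.2 h1)
      fun Δ hΔ ht => .plusL (hΔ rfl) ht
  | plusR h1 _ ih =>
    exact ih.one {_} (Set.toFinite _) (Set.singleton_subset_iff.2 h1)
      fun Δ hΔ ht => .plusR (hΔ rfl) ht
  | appR h1 h2 h3 h4 _ ih =>
    exact ih.one {_, _} (Set.toFinite _)
      (Set.insert_subset h1 (Set.singleton_subset_iff.2 h2))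
      fun Δ hΔ ht => .appR (hΔ (Or.inl rfl)) (hΔ (Or.inr rfl)) h3 h4 ht
  | rulePB h1 h2 _ _ ih1 ih2 =>
    exact ih1.two ∅ (Set.toFinite _) (Set.empty_subset _) ih2
      fun Δ hΔ ht ht' => .rulePB h1 h2 ht ht'
  | rulePBe h1 h2 h3 _ _ ih1 ih2 =>
    exact ih1.two ∅ (Set.toFinite _) (Set.empty_subset _) ih2
      fun Δ hΔ ht ht' => .rulePBe h1 h2 h3 ht ht'
  | cutF h1 => simp at h1
  | cutE h1 => simp at h1
  | ruleT h1 => simp [Logic.J] at h1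
  | ruleD h1 => simp [Logic.J] at h1
  | rule4 h1 => simp [Logic.J] at h1
  | ruleB h1 => simp [Logic.J] at h1
  | rule5 h1 => simp [Logic.J] at h1

theorem tabN_sound {cs : ConstSpec Logic.J} {R : Set Fml}
    {Γ : Set Node} {n : ℕ} (h : TabN Logic.J cs true false R Γ n)
    (M : MModel) (hM : IsModel Logic.J cs M) : ¬ ∀ x ∈ Γ, NodeSat M x := by
  have key : ∀ {Γ : Set Node} {x : Node}, (∀ y ∈ Γ, NodeSat M y) → NodeSat M x →
      ∀ y ∈ insert x Γ, NodeSat M y := by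
    rintro Γ x h hx y (rfl | hy)
    · exact hx
    · exact h y hy
  induction h with
  | closeF h1 h2 => exact fun hs => hs _ h2 (hs _ h1)
  | closeE h1 h2 => exact fun hs => hs _ h2 (hs _ h1)
  | closeBot h1 => exact fun hs => hs _ h1
  | closeCS h1 h2 => exact fun hs => hs _ h2 (hM.e3 _ _ h1)
  | fNeg h1 _ ih => exact fun hs => ih (key hs (not_not.1 (hs _ h1)))
  | @fImp _ A B _ h1 _ ih =>
    intro hs
    have h : ¬ (M.sat A → M.sat B) := hs _ h1
    rw [Classical.not_imp] at h
    exact ih (key (key hs h.2) h.1)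
  | @tImp _ A B _ _ h1 _ _ ih1 ih2 =>
    intro hs
    have h : M.sat A → M.sat B := hs _ h1
    by_cases hA : M.sat A
    · exact ih2 (key hs (h hA))
    · exact ih1 (key hs hA)
  | te h1 _ ih => exact fun hs => ih (key hs (show NodeSat M (.fml _) from hs _ h1))
  | fe h1 _ ih => exact fun hs => ih (key hs (show NodeSat M (.fml _) from hs _ h1))
  | plusL h1 _ ih => exact fun hs => ih (key hs fun hh => hs _ h1 (hM.e2l _ _ hh))
  | plusR h1 _ ih => exact fun hs => ih (key hs fun hh => hs _ h1 (hM.e2r _ _ hh))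
  | appR h1 h2 _ _ _ ih =>
    exact fun hs => ih (key hs (hM.e1 _ _ _ _ (hs _ h1) (hs _ h2)))
  | @rulePB _ A _ _ _ _ _ _ ih1 ih2 =>
    intro hs
    by_cases hA : M.sat A
    · exact ih1 (key hs hA)
    · exact ih2 (key hs hA)
  | @rulePBe _ t A _ _ _ _ _ _ _ ih1 ih2 =>
    intro hs
    by_cases hA : A ∈ M.ev t
    · exact ih1 (key hs hA)
    · exact ih2 (key hs hA)
  | cutF h1 => simp at h1
  | cutE h1 => simp at h1
  | ruleT h1 => simp [Logic.J] at h1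
  | ruleD h1 => simp [Logic.J] at h1
  | rule4 h1 => simp [Logic.J] at h1
  | ruleB h1 => simp [Logic.J] at h1
  | rule5 h1 => simp [Logic.J] at h1

theorem lindenbaum {cs : ConstSpec Logic.J} {R : Set Fml} {Γ : Set Node}
    (h : ¬ Tab Logic.J cs true false R Γ) :
    ∃ Δ, Γ ⊆ Δ ∧ ¬ Tab Logic.J cs true false R Δ ∧
      ∀ x, ¬ Tab Logic.J cs true false R (insert x Δ) → x ∈ Δ := by
  obtain ⟨Δ, hΓΔ, hmax⟩ := zorn_subset_nonempty {Δ | ¬ Tab Logic.J cs true false R Δ} (by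
    intro c hc hch hne
    refine ⟨⋃₀ c, ?_, fun s hs => Set.subset_sUnion_of_mem hs⟩
    rintro ⟨n, hn⟩
    obtain ⟨Θ, hf, hs, ht⟩ := tabN_finSupp hn
    obtain ⟨s, hsc, hΘ⟩ := DirectedOn.exists_mem_subset_of_finite_of_subset_sUnion hne
      hch.directedOn hf hs
    exact hc hsc ⟨n, tabN_mono ht hΘ⟩) Γ h
  refine ⟨Δ, hΓΔ, hmax.1, fun x hx => ?_⟩
  exact hmax.2 hx (Set.subset_insert _ _) (Set.mem_insert _ _)

/-- The least admissible evidence function generated by a branch. -/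
inductive Ev (cs : ConstSpec Logic.J) (R : Set Fml) (Δ : Set Node) : Term → Fml → Prop
  | base {t B} : CSSub cs R B → Node.pos t B ∈ Δ → Ev cs R Δ t B
  | con {c F} : Fml.box (.const c) F ∈ cs.set → Ev cs R Δ (.const c) F
  | suml {s t B} : Ev cs R Δ s B → Ev cs R Δ (.sum s t) B
  | sumr {s t B} : Ev cs R Δ t B → Ev cs R Δ (.sum s t) B
  | app {s t A B} : Ev cs R Δ s (.imp A B) → Ev cs R Δ t A → Ev cs R Δ (.app s t) B

theorem Subf.trans {A B C : Fml} (h : Subf A B) (h' : Subf B C) : Subf A C := by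
  induction h' with
  | refl => exact h
  | neg _ ih => exact .neg ih
  | impL _ ih => exact .impL ih
  | impR _ ih => exact .impR ih
  | box _ ih => exact .box ih

theorem CSSub.sub {cs : ConstSpec Logic.J} {R : Set Fml} {A B : Fml}
    (h : CSSub cs R B) (h' : Subf A B) : CSSub cs R A := by
  rcases h with ⟨C, hC, hB⟩ | ⟨C, hC, hB⟩
  · exact Or.inl ⟨C, hC, h'.trans hB⟩
  · exact Or.inr ⟨C, hC, h'.trans hB⟩

theorem Ev.cssub {cs : ConstSpec Logic.J} {R : Set Fml} {Δ : Set Node} {t : Term} {B : Fml}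
    (h : Ev cs R Δ t B) : CSSub cs R B := by
  induction h with
  | base h _ => exact h
  | con h => exact Or.inr ⟨_, h, .box (.refl _)⟩
  | suml _ ih => exact ih
  | sumr _ ih => exact ih
  | app _ _ ih _ => exact ih.sub (.impR (.refl _))

theorem SubTm.trans {s t u : Term} (h : SubTm s t) (h' : SubTm t u) : SubTm s u := by
  induction h' with
  | refl => exact h
  | appL _ ih => exact .appL ih
  | appR _ ih => exact .appR ih
  | sumL _ ih => exact .sumL ih
  | sumR _ ih => exact .sumR ih
  | bang _ ih => exact .bang ih
  | quest _ ih => exact .quest ih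
  | qbar _ ih => exact .qbar ih

theorem OccT.sub {s t : Term} {A : Fml} (h : SubTm s t) (h' : OccT t A) : OccT s A := by
  induction h' with
  | neg _ ih => exact .neg ih
  | impL _ ih => exact .impL ih
  | impR _ ih => exact .impR ih
  | boxT h2 => exact .boxT (h.trans h2)
  | boxF _ ih => exact .boxF ih

theorem OccRoot.sub {R : Set Fml} {s t : Term} (h' : OccRoot R t) (h : SubTm s t) :
    OccRoot R s := by
  obtain ⟨B, hB, hB'⟩ := h'
  exact ⟨B, hB, hB'.sub h⟩

theorem occT_of_subf {t : Term} {A B : Fml} (h : Subf A B) (hA : OccT t A) : OccT t B := by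
  induction h with
  | refl => exact hA
  | neg _ ih => exact .neg ih
  | impL _ ih => exact .impL ih
  | impR _ ih => exact .impR ih
  | box _ ih => exact .boxF ih

section sat
variable {cs : ConstSpec Logic.J} {R : Set Fml} {Δ : Set Node}

theorem ev_pos (hn : ¬ Tab Logic.J cs true false R Δ)
    (hm : ∀ x, ¬ Tab Logic.J cs true false R (insert x Δ) → x ∈ Δ)
    {t : Term} {B : Fml} (h : Ev cs R Δ t B) (ht : OccRoot R t) : Node.pos t B ∈ Δ := by
  induction h with
  | base _ h => exact h
  | @con c F hF =>
    apply hm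
    rintro ⟨n, h1⟩
    refine hn ⟨_, .rulePB rfl (Or.inr ⟨_, hF, .refl _⟩) (.te (Or.inl rfl) (tabN_mono h1
      (Set.insert_subset_insert (Set.subset_insert _ _)))) (.closeCS hF (Or.inl rfl))⟩
  | suml h1 ih =>
    have h2 := ih (ht.sub (.sumL (.refl _)))
    apply hm
    rintro ⟨n, h3⟩
    exact hn ⟨_, .rulePBe rfl h1.cssub ht h3 (.plusL (Or.inl rfl)
      (.closeE (Or.inr (Or.inr h2)) (Or.inl rfl)))⟩
  | sumr h1 ih =>
    have h2 := ih (ht.sub (.sumR (.refl _)))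
    apply hm
    rintro ⟨n, h3⟩
    exact hn ⟨_, .rulePBe rfl h1.cssub ht h3 (.plusR (Or.inl rfl)
      (.closeE (Or.inr (Or.inr h2)) (Or.inl rfl)))⟩
  | app h1 h2 ih1 ih2 =>
    have h3 := ih1 (ht.sub (.appL (.refl _)))
    have h4 := ih2 (ht.sub (.appR (.refl _)))
    apply hm
    rintro ⟨n, h5⟩
    exact hn ⟨_, .appR h3 h4 h1.cssub ht h5⟩

/-- The model of a saturated branch. -/
def brModel (cs : ConstSpec Logic.J) (R : Set Fml) (Δ : Set Node) : MModel where
  ev t := {B | Ev cs R Δ t B}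
  val n := Node.fml (.prop n) ∈ Δ

theorem brModel_isModel : IsModel Logic.J cs (brModel cs R Δ) where
  e1 _ _ _ _ h1 h2 := Ev.app h1 h2
  e2l _ _ _ h := Ev.suml h
  e2r _ _ _ h := Ev.sumr h
  e3 _ _ h := Ev.con h
  e4 h := by simp [Logic.J] at h
  e5 h := by simp [Logic.J] at h
  e6 h := by simp [Logic.J] at h
  e7 h := by simp [Logic.J] at h
  e8 h := by simp [Logic.J] at h

theorem truth (hn : ¬ Tab Logic.J cs true false R Δ)
    (hm : ∀ x, ¬ Tab Logic.J cs true false R (insert x Δ) → x ∈ Δ)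
    (B : Fml) (C : Fml) (hC : C ∈ R) (hB : Subf B C) :
    (Node.fml B ∈ Δ → (brModel cs R Δ).sat B) ∧
    (Node.fml (.neg B) ∈ Δ → ¬ (brModel cs R Δ).sat B) := by
  induction B with
  | prop n => exact ⟨fun h => h, fun h h' => hn ⟨_, .closeF h' h⟩⟩
  | bot => exact ⟨fun h => (hn ⟨_, .closeBot h⟩).elim, fun _ h => h⟩
  | neg B ih =>
    have ih := ih (Subf.trans (.neg (.refl _)) hB)
    refine ⟨ih.2, fun h h' => h' (ih.1 (hm _ ?_))⟩
    rintro ⟨n, h1⟩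
    exact hn ⟨_, .fNeg h h1⟩
  | imp A B ihA ihB =>
    have ihA := ihA (Subf.trans (.impL (.refl _)) hB)
    have ihB := ihB (Subf.trans (.impR (.refl _)) hB)
    constructor
    · intro h hA
      by_contra hB'
      have h1 : Tab Logic.J cs true false R (insert (Node.fml (.neg A)) Δ) := by
        by_contra h1
        exact ihA.2 (hm _ h1) hA
      have h2 : Tab Logic.J cs true false R (insert (Node.fml B) Δ) := by
        by_contra h2
        exact hB' (ihB.1 (hm _ h2))
      obtain ⟨m, h1⟩ := h1
      obtain ⟨n, h2⟩ := h2
      exact hn ⟨_, .tImp h h1 h2⟩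
    · intro h hAB
      have hA : Node.fml A ∈ Δ := by
        apply hm
        rintro ⟨n, h1⟩
        exact hn ⟨_, .fImp h (tabN_mono h1
          (Set.insert_subset_insert (Set.subset_insert _ _)))⟩
      have hB : Node.fml (.neg B) ∈ Δ := by
        apply hm
        rintro ⟨n, h1⟩
        exact hn ⟨_, .fImp h (tabN_mono h1 (Set.subset_insert _ _))⟩
      exact ihB.2 hB (hAB (ihA.1 hA))
  | box t B _ =>
    constructor
    · intro h
      refine Ev.base (Or.inl ⟨C, hC, Subf.trans (.box (.refl _)) hB⟩) (hm _ ?_)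
      rintro ⟨n, h1⟩
      exact hn ⟨_, .te h h1⟩
    · intro h h'
      have hp := ev_pos hn hm h' ⟨C, hC, occT_of_subf hB (.boxT (.refl _))⟩
      exact hn ⟨_, .fe h (.closeE (Or.inr hp) (Or.inl rfl))⟩

end sat

end JLTab

/-- soundness and completeness of the analytic tableaux for the
basic justification logic J: a J-formula A has a J^e_CS-tableau proof iff A is
J_CS-valid. -/
theorem JLTab.J_tableau_sound_complete (cs : ConstSpec Logic.J) (A : Fml)
    (hA : FmlInLang Logic.J A) :
    TabProof Logic.J cs true false A ↔ Valid Logic.J cs A := by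
  constructor
  · rintro ⟨n, h⟩ M hM
    by_contra hs
    refine tabN_sound h M hM ?_
    rintro x rfl
    exact hs
  · intro hv
    by_contra h
    obtain ⟨Δ, hs, hn, hm⟩ := lindenbaum h
    exact (truth hn hm (.neg A) (.neg A) rfl (.refl _)).1 (hs rfl) (hv _ brModel_isModel)
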